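/- Let v, X : ℝ × ℝ³ → ℝ³ be continuously differentiable and f : ℝ × ℝ³ → ℝ be twice continuously differentiable. Assume that for all (t, x), ∂_t X(t,x) + (D_x X)(t,x)(v(t,x)) = (D_x v)(t,x)(X(t,x)), i.e. X satisfies the transport-stretching equation ∂_t X + v·∇X = X·∇v. Then for all (t, x): ∂_t(∂_X f)(t,x) + (v·∇(∂_X f))(t,x) = ∂_X(∂_t f + v·∇f)(t,x), where ∂_Y g(t,x) := (D_x g)(t,x)(Y(t,x)) denotes the spatial directional derivative of g along Y. In other words, the operators ∂_X and the material derivative ∂_t + v·∇ commute. -/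

import Mathlib

/-!
Writing `D` for the full space-time derivative, slice derivatives are `D` applied to vectors `(0, w)`
or `(1, 0)`, so `∂_X f = Df (0, X)` and the material derivative of `f` is `Df (1, v)`. The product
rule turns the two sides of the claim into
`D²f (1, v) (0, X) + Df (0, DX (1, v))` and `D²f (0, X) (1, v) + Df (0, Dv (0, X))`.
The first terms agree by symmetry of `D²f`, the second ones by the transport-stretching equation
`DX (1, v) = Dv (0, X)`.
-/

noncomputable section

abbrev E3 := EuclideanSpace ℝ (Fin 3)

/-- The spatial directional derivative `∂_Y g (t,x) = (D_x g)(t,x)(Y(t,x))` of a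
function `g` on `ℝ × ℝ³` along a time-dependent vector field `Y`. -/
def dirDeriv (Y : ℝ × E3 → E3) (g : ℝ × E3 → ℝ) : ℝ × E3 → ℝ := fun q =>
  fderiv ℝ (fun y => g (q.1, y)) q.2 (Y q)

theorem fderiv_slice_space {F : Type*} [NormedAddCommGroup F] [NormedSpace ℝ F]
    {g : ℝ × E3 → F} {t : ℝ} {x : E3} (hg : DifferentiableAt ℝ g (t, x)) (w : E3) :
    fderiv ℝ (fun y => g (t, y)) x w = fderiv ℝ g (t, x) (0, w) := by
  have h := hg.hasFDerivAt.comp x (hasFDerivAt_prodMk_right t x)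
  have h' : fderiv ℝ (fun y => g (t, y)) x = _ := h.fderiv
  rw [h']
  simp

theorem deriv_slice_time {F : Type*} [NormedAddCommGroup F] [NormedSpace ℝ F]
    {g : ℝ × E3 → F} {t : ℝ} {x : E3} (hg : DifferentiableAt ℝ g (t, x)) :
    deriv (fun s => g (s, x)) t = fderiv ℝ g (t, x) (1, 0) := by
  have h : HasDerivAt (fun s : ℝ => (s, x)) ((1 : ℝ), (0 : E3)) t :=
    (hasDerivAt_id t).prodMk (hasDerivAt_const t x)
  exact (HasFDerivAt.comp_hasDerivAt (f := fun s : ℝ => (s, x)) t hg.hasFDerivAt h).deriv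

theorem deriv_slice_add_fderiv_slice {F : Type*} [NormedAddCommGroup F] [NormedSpace ℝ F]
    {g : ℝ × E3 → F} {t : ℝ} {x : E3} (hg : DifferentiableAt ℝ g (t, x)) (w : E3) :
    deriv (fun s => g (s, x)) t + fderiv ℝ (fun y => g (t, y)) x w
      = fderiv ℝ g (t, x) (1, w) := by
  rw [deriv_slice_time hg, fderiv_slice_space hg, ← map_add]
  simp

/-- Product rule for `q ↦ Df q (c, Y q)` with `c` constant. -/
theorem hasFDerivAt_fderiv_apply_const_prod {f : ℝ × E3 → ℝ} {Y : ℝ × E3 → E3}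
    (hf : ContDiff ℝ 2 f) (hY : ContDiff ℝ 1 Y) (c : ℝ) (p : ℝ × E3) :
    ∃ L : ℝ × E3 →L[ℝ] ℝ, HasFDerivAt (fun q => fderiv ℝ f q (c, Y q)) L p ∧
      ∀ u, L u = fderiv ℝ (fderiv ℝ f) p u (c, Y p) + fderiv ℝ f p (0, fderiv ℝ Y p u) := by
  have h1 : HasFDerivAt (fderiv ℝ f) (fderiv ℝ (fderiv ℝ f) p) p :=
    (((hf.fderiv_right (m := 1) (by norm_num)).differentiable (by norm_num)) p).hasFDerivAt
  have h2 : HasFDerivAt Y (fderiv ℝ Y p) p :=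
    ((hY.differentiable (by norm_num)) p).hasFDerivAt
  refine ⟨_, h1.clm_apply ((hasFDerivAt_const c p).prodMk h2), fun u => ?_⟩
  simp [add_comm]

theorem material_derivative_commutes_with_dirDeriv
    (v X : ℝ × E3 → E3) (f : ℝ × E3 → ℝ)
    (hv : ContDiff ℝ 1 v) (hX : ContDiff ℝ 1 X) (hf : ContDiff ℝ 2 f)
    (hstretch : ∀ t : ℝ, ∀ x : E3,
      deriv (fun s => X (s, x)) t + fderiv ℝ (fun y => X (t, y)) x (v (t, x))
        = fderiv ℝ (fun y => v (t, y)) x (X (t, x))) :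
    ∀ t : ℝ, ∀ x : E3,
      deriv (fun s => dirDeriv X f (s, x)) t
        + fderiv ℝ (fun y => dirDeriv X f (t, y)) x (v (t, x))
      = dirDeriv X
          (fun q => deriv (fun s => f (s, q.2)) q.1
            + fderiv ℝ (fun y => f (q.1, y)) q.2 (v q)) (t, x) := by
  intro t x
  have hfd : Differentiable ℝ f := hf.differentiable (by norm_num)
  have hvd : Differentiable ℝ v := hv.differentiable (by norm_num)
  have hXd : Differentiable ℝ X := hX.differentiable (by norm_num)
  have eX : dirDeriv X f = fun q => fderiv ℝ f q (0, X q) :=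
    funext fun q => fderiv_slice_space (hfd (q.1, q.2)) (X q)
  have ev : (fun q : ℝ × E3 => deriv (fun s => f (s, q.2)) q.1
      + fderiv ℝ (fun y => f (q.1, y)) q.2 (v q)) = fun q => fderiv ℝ f q (1, v q) :=
    funext fun q => deriv_slice_add_fderiv_slice (hfd (q.1, q.2)) (v q)
  obtain ⟨L, hL, hLu⟩ := hasFDerivAt_fderiv_apply_const_prod hf hX 0 (t, x)
  obtain ⟨M, hM, hMu⟩ := hasFDerivAt_fderiv_apply_const_prod hf hv 1 (t, x)
  have hs := hstretch t x
  rw [deriv_slice_add_fderiv_slice (hXd _), fderiv_slice_space (hvd _)] at hs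
  have hsymm : IsSymmSndFDerivAt ℝ f (t, x) :=
    hf.contDiffAt.isSymmSndFDerivAt (by simp)
  rw [ev, eX, deriv_slice_add_fderiv_slice hL.differentiableAt, hL.fderiv, hLu, hs]
  unfold dirDeriv
  rw [fderiv_slice_space (g := fun q => fderiv ℝ f q (1, v q)) hM.differentiableAt,
    hM.fderiv, hMu, hsymm.eq]
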